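/- Let m > 0, let k : ℝ → ℝ be differentiable, g : ℝ → ℝ be any function, and let z : ℝ → ℂ be twice differentiable satisfying m·z''(t) + g(t)·exp(2·k(t))·z(t) = 0 for all t. Let τ : ℝ → ℝ be differentiable with τ'(s) = exp(−k(τ(s))) for all s, and set w = z ∘ τ. Then w is twice differentiable and satisfies the Gorringe–Leach equation m·w''(s) + m·k'(τ(s))·exp(−k(τ(s)))·w'(s) + g(τ(s))·w(s) = 0 for all s. -/

import Mathlib

/-- If `z` satisfies `m·z'' + g(t)·e^{2k(t)}·z = 0` and `τ` is the inverse
Euler–Sundman reparametrization, `τ'(s) = e^{−k(τ(s))}`, then `w = z ∘ τ` is twice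
differentiable and satisfies the Gorringe–Leach equation
`m·w'' + m·k'(τ)·e^{−k(τ)}·w' + g(τ)·w = 0`. -/
theorem gorringe_leach_reparametrization (m : ℝ) (hm : 0 < m)
    (k : ℝ → ℝ) (hk : Differentiable ℝ k) (g : ℝ → ℝ)
    (z : ℝ → ℂ) (hz : Differentiable ℝ z) (hz' : Differentiable ℝ (deriv z))
    (heom : ∀ t, (m : ℂ) * deriv (deriv z) t +
      ((g t * Real.exp (2 * k t) : ℝ) : ℂ) * z t = 0)
    (τ : ℝ → ℝ) (hτ : Differentiable ℝ τ)
    (hτ' : ∀ s, deriv τ s = Real.exp (-(k (τ s))))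
    (w : ℝ → ℂ) (hw : ∀ s, w s = z (τ s)) :
    Differentiable ℝ w ∧ Differentiable ℝ (deriv w) ∧
      ∀ s, (m : ℂ) * deriv (deriv w) s +
        (m : ℂ) * ((deriv k (τ s) * Real.exp (-(k (τ s))) : ℝ) : ℂ) * deriv w s +
        ((g (τ s) : ℝ) : ℂ) * w s = 0 := by
  have hwf : w = z ∘ τ := funext hw
  have hT : ∀ s, HasDerivAt τ (Real.exp (-(k (τ s)))) s := fun s => by
    rw [← hτ' s]; exact (hτ s).hasDerivAt
  have h1 : ∀ s, HasDerivAt w (Real.exp (-(k (τ s))) • deriv z (τ s)) s := fun s => by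
    rw [hwf]
    exact HasDerivAt.scomp s (hz (τ s)).hasDerivAt (hT s)
  have hd : deriv w = fun s => Real.exp (-(k (τ s))) • deriv z (τ s) :=
    funext fun s => (h1 s).deriv
  have hE : ∀ s, HasDerivAt (fun s => Real.exp (-(k (τ s))))
      (Real.exp (-(k (τ s))) * (-(deriv k (τ s) * Real.exp (-(k (τ s)))))) s := fun s =>
    (((hk (τ s)).hasDerivAt.comp s (hT s)).neg).exp
  have hZ : ∀ s, HasDerivAt (fun s => deriv z (τ s))
      (Real.exp (-(k (τ s))) • deriv (deriv z) (τ s)) s := fun s =>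
    HasDerivAt.scomp s (hz' (τ s)).hasDerivAt (hT s)
  have h2 := fun s => (hE s).smul (hZ s)
  refine ⟨fun s => (h1 s).differentiableAt, ?_, fun s => ?_⟩
  · rw [hd]
    exact fun s => (h2 s).differentiableAt
  · have h3 : deriv (deriv w) s =
        Real.exp (-k (τ s)) • Real.exp (-k (τ s)) • deriv (deriv z) (τ s) +
        (Real.exp (-k (τ s)) * -(deriv k (τ s) * Real.exp (-k (τ s)))) • deriv z (τ s) := by
      rw [hd]
      exact (h2 s).deriv
    have he : Real.exp (2 * k (τ s)) * Real.exp (-(k (τ s))) ^ 2 = 1 := by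
      rw [sq, ← Real.exp_add, ← Real.exp_add, ← Real.exp_zero]
      congr 1
      ring
    have he' : (Real.exp (2 * k (τ s)) : ℂ) * (Real.exp (-(k (τ s))) : ℂ) ^ 2 = 1 := by
      rw [← Complex.ofReal_pow, ← Complex.ofReal_mul, he, Complex.ofReal_one]
    have h := heom (τ s)
    rw [h3, hd, hw s]
    simp only [Complex.real_smul, Complex.ofReal_mul, Complex.ofReal_neg] at h ⊢
    generalize (Real.exp (2 * k (τ s)) : ℂ) = A at *
    generalize (Real.exp (-(k (τ s))) : ℂ) = B at *
    linear_combination B ^ 2 * h - (g (τ s) : ℂ) * z (τ s) * he'
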